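/- Let (G,x,y) encode a reflexive regular map that is simple, satisfies 2q² > |G| (density exceeding 1/2), and has p = 3. Let v' be a diagonal neighbour of a vertex v. Then J = q if and only if v' is adjacent to v in Γ, and J = q if and only if V_v = V. -/

import Mathlib

/-!
The group `G` acts transitively on arcs, hence on pairs of diagonal neighbours, and the stabilizer
of a vertex `v` is the cyclic group `⟨S_v⟩`. If `S_v ^ n` fixes a diagonal neighbour `v'`, then it
lies in `⟨S_v'⟩` and has the order of `S_v' ^ n`; as a finite cyclic group has one subgroup of each
order, it lies in `⟨S_v' ^ n⟩`. By arc transitivity the same holds for all diagonal neighbours, and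
iterating along chains shows that `S_v ^ n` fixes everything aligned with `v`. Hence `J` is the
length of the `S_v`-orbit of `v'`.

In a simple map this orbit has length `q` if `v'` is adjacent to `v`. Otherwise it is disjoint from
the orbit of a neighbour of `v`, which already has length `q`, and density above `1/2` means
`|V| < 2q`. If `v'` is adjacent to `v`, arc transitivity makes all adjacent vertices diagonal
neighbours, so alignment follows from connectedness.
-/

namespace RegularMap

variable {G : Type*} [Group G]

/-- The vertex set of the map: left cosets of the cyclic subgroup generated by `y`. -/
abbrev Vertex (y : G) : Type _ := G ⧸ Subgroup.zpowers y

/-- The rotation about the vertex `v = g⟨y⟩`, namely `g * y * g⁻¹`. -/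
def rot (y : G) (v : Vertex y) : G :=
  Quotient.liftOn' v (fun g => g * y * g⁻¹) (by
    intro a b h
    obtain ⟨k, hk⟩ := QuotientGroup.leftRel_apply.mp h
    have hk' : y ^ k = a⁻¹ * b := hk
    have hb : b = a * y ^ k := by rw [hk']; group
    subst hb
    group)

/-- Two vertices are adjacent iff they are distinct and form the endpoint pair of
some edge `g⟨x*y⟩`, whose endpoints are `g⟨y⟩` and `g*x*y⟨y⟩`. -/
def Adj (x y : G) (v w : Vertex y) : Prop :=
  v ≠ w ∧ ∃ g : G,
    ({v, w} : Set (Vertex y)) = {QuotientGroup.mk g, QuotientGroup.mk (g * x * y)}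

/-- The map is simple: no edge has equal endpoints, and distinct edges (left cosets
of `⟨x*y⟩`) have distinct endpoint pairs. -/
def IsSimple (x y : G) : Prop :=
  (∀ g : G, (QuotientGroup.mk g : Vertex y) ≠ QuotientGroup.mk (g * x * y)) ∧
  ∀ g h : G,
    ({QuotientGroup.mk g, QuotientGroup.mk (g * x * y)} : Set (Vertex y)) =
      {QuotientGroup.mk h, QuotientGroup.mk (h * x * y)} →
    (QuotientGroup.mk g : G ⧸ Subgroup.zpowers (x * y)) = QuotientGroup.mk h

/-- The map is reflexive: some group automorphism inverts both `x` and `y`. -/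
def IsReflexive (x y : G) : Prop :=
  ∃ σ : G ≃* G, σ x = x⁻¹ ∧ σ y = y⁻¹

/-- An automorphism of the map (given a reflection σ): either orientation preserving,
`g⟨y⟩ ↦ a*g⟨y⟩`, or orientation reversing, `g⟨y⟩ ↦ a*σ(g)⟨y⟩`. -/
def IsMapAut (y : G) (σ : G ≃* G) (φ : Vertex y → Vertex y) : Prop :=
  (∃ a : G, ∀ g : G, φ (QuotientGroup.mk g) = QuotientGroup.mk (a * g)) ∨
  (∃ a : G, ∀ g : G, φ (QuotientGroup.mk g) = QuotientGroup.mk (a * σ g))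

/-- `v'` is a diagonal neighbour of `v`: `v' = S_w² • v` for some vertex `w` adjacent to `v`. -/
def DiagNeighbor (x y : G) (v v' : Vertex y) : Prop :=
  ∃ w : Vertex y, Adj x y v w ∧ v' = rot y w ^ 2 • v

/-- Diagonal alignment: the reflexive-transitive closure of the diagonal-neighbour relation. -/
def Aligned (x y : G) : Vertex y → Vertex y → Prop :=
  Relation.ReflTransGen (DiagNeighbor x y)

/-- The primitive period `J`: the least `j ≥ 1` such that `S_v^j` fixes every vertex
diagonally aligned with `v` (this is independent of `v`). -/
noncomputable def primPeriod (x y : G) : ℕ :=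
  sInf {j : ℕ | 1 ≤ j ∧ ∀ v v' : Vertex y, Aligned x y v v' → rot y v ^ j • v' = v'}

/-- The even period `T = lcm(J, 2)`. -/
noncomputable def evenPeriod (x y : G) : ℕ := Nat.lcm (primPeriod x y) 2

/-- Relators of the tetrahedral group ⟨X,Y ∣ X³, Y³, (XY)²⟩. -/
def tetRels : Set (FreeGroup (Fin 2)) :=
  {FreeGroup.of 0 ^ 3, FreeGroup.of 1 ^ 3, (FreeGroup.of 0 * FreeGroup.of 1) ^ 2}

/-- Relators of the Fermat group ⟨X,Y ∣ X³, Y^(2n), (XY)², [X,Y]³⟩. -/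
def fermatRels (n : ℕ) : Set (FreeGroup (Fin 2)) :=
  {FreeGroup.of 0 ^ 3, FreeGroup.of 1 ^ (2 * n), (FreeGroup.of 0 * FreeGroup.of 1) ^ 2,
    (FreeGroup.of 0 * FreeGroup.of 1 * (FreeGroup.of 0)⁻¹ * (FreeGroup.of 1)⁻¹) ^ 3}

/-- `(G,x,y)` is the tetrahedral map: the canonical homomorphism from the presented
group ⟨X,Y ∣ X³, Y³, (XY)²⟩ sending X to x and Y to y is an isomorphism. -/
def IsTet (G : Type*) [Group G] (x y : G) : Prop :=
  ∃ e : PresentedGroup tetRels ≃* G,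
    e (PresentedGroup.of 0) = x ∧ e (PresentedGroup.of 1) = y

/-- `(G,x,y)` is the Fermat map `Fer(n)`: the canonical homomorphism from the Fermat
group `G_n` sending X to x and Y to y is an isomorphism. -/
def IsFermat (n : ℕ) (G : Type*) [Group G] (x y : G) : Prop :=
  ∃ e : PresentedGroup (fermatRels n) ≃* G,
    e (PresentedGroup.of 0) = x ∧ e (PresentedGroup.of 1) = y

theorem mem_zpowers_of_sq_eq_one {a t : G} (ht : t ^ 2 = 1) (ha : a ∈ Subgroup.zpowers t) :
    a = 1 ∨ a = t := by
  obtain ⟨k, rfl⟩ := Subgroup.mem_zpowers_iff.mp ha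
  have ht' : t ^ (2 : ℤ) = 1 := mod_cast ht
  rcases Int.even_or_odd' k with ⟨m, rfl | rfl⟩
  · left
    rw [zpow_mul, ht', one_zpow]
  · right
    rw [zpow_add_one, zpow_mul, ht', one_zpow, one_mul]

theorem pow_mem_zpowers_pow_iff {c : G} {m k : ℕ} :
    c ^ m ∈ Subgroup.zpowers (c ^ k) ↔ k.gcd (orderOf c) ∣ m := by
  rw [← zpow_natCast c k, ← zpow_natCast c m, ← Int.gcd_natCast_natCast]
  simp_rw [Int.gcd_dvd_iff, ← Int.sub_eq_iff_eq_add', ← dvd_def, ← Int.modEq_iff_dvd,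
    ← zpow_eq_zpow_iff_modEq, zpow_mul, ← Subgroup.mem_zpowers_iff]

theorem mem_zpowers_of_orderOf_dvd {a b c : G} (hc : IsOfFinOrder c)
    (ha : a ∈ Subgroup.zpowers c) (hb : b ∈ Subgroup.zpowers c) (h : orderOf a ∣ orderOf b) :
    a ∈ Subgroup.zpowers b := by
  obtain ⟨m, rfl⟩ := hc.mem_powers_iff_mem_zpowers.mpr ha
  obtain ⟨k, rfl⟩ := hc.mem_powers_iff_mem_zpowers.mpr hb
  change orderOf (c ^ m) ∣ orderOf (c ^ k) at h
  rw [hc.orderOf_pow, hc.orderOf_pow] at h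
  have hgcd : (orderOf c).gcd k ∣ (orderOf c).gcd m := by
    have := Nat.div_dvd_div_left (Nat.div_dvd_of_dvd (Nat.gcd_dvd_left (orderOf c) k)) h
    rwa [Nat.div_div_self (Nat.gcd_dvd_left _ _) hc.orderOf_pos.ne',
      Nat.div_div_self (Nat.gcd_dvd_left _ _) hc.orderOf_pos.ne'] at this
  exact pow_mem_zpowers_pow_iff.mpr (Nat.gcd_comm k _ ▸ hgcd.trans (Nat.gcd_dvd_right _ _))

section GroupAction

variable {α : Type*} [MulAction G α]

open MulAction

theorem conj_pow_smul_smul (g a : G) (n : ℕ) (b : α) :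
    (g * a * g⁻¹) ^ n • g • b = g • a ^ n • b := by
  rw [conj_pow, mul_smul, mul_smul, inv_smul_smul]

theorem period_conj_smul (g a : G) (b : α) : period (g * a * g⁻¹) (g • b) = period a b :=
  Nat.dvd_right_iff_eq.mp fun n => by
    rw [← pow_smul_eq_iff_period_dvd, ← pow_smul_eq_iff_period_dvd, conj_pow_smul_smul,
      smul_left_cancel_iff]

theorem period_eq_ncard_orbit [Finite α] (g : G) (a : α) :
    period g a = (orbit (Subgroup.zpowers g) a).ncard := by
  have := Fintype.ofFinite (orbit (Subgroup.zpowers g) a)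
  rw [period_eq_minimalPeriod, minimalPeriod_eq_card, ← Nat.card_eq_fintype_card]
  rfl

theorem period_add_period_le_card [Finite α] {g : G} {a b : α}
    (h : b ∉ orbit (Subgroup.zpowers g) a) : period g a + period g b ≤ Nat.card α := by
  have hdisj : Disjoint (orbit (Subgroup.zpowers g) a) (orbit (Subgroup.zpowers g) b) :=
    (orbit.eq_or_disjoint a b).resolve_left fun heq => h (heq ▸ mem_orbit_self b)
  rw [period_eq_ncard_orbit, period_eq_ncard_orbit, ← Set.ncard_union_eq hdisj]
  exact Set.ncard_le_card _

end GroupAction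

section Map

variable {x y : G} {v v' w w' : Vertex y}

theorem rot_smul (g : G) (v : Vertex y) : rot y (g • v) = g * rot y v * g⁻¹ := by
  induction v using QuotientGroup.induction_on with
  | H a =>
    change g * a * y * (g * a)⁻¹ = g * (a * y * a⁻¹) * g⁻¹
    group

theorem orderOf_rot (v : Vertex y) : orderOf (rot y v) = orderOf y := by
  induction v using QuotientGroup.induction_on with
  | H a => exact (MulAut.conj a).orderOf_eq y

theorem isOfFinOrder_rot (hy : IsOfFinOrder y) (v : Vertex y) : IsOfFinOrder (rot y v) := by
  rwa [← orderOf_pos_iff, orderOf_rot, orderOf_pos_iff]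

theorem stabilizer_eq_zpowers_rot (v : Vertex y) :
    MulAction.stabilizer G v = Subgroup.zpowers (rot y v) := by
  induction v using QuotientGroup.induction_on with
  | H a =>
    calc MulAction.stabilizer G (a : Vertex y)
        = MulAction.stabilizer G (a • ((1 : G) : Vertex y)) := by
          rw [MulAction.Quotient.smul_coe, smul_eq_mul, mul_one]
      _ = (Subgroup.zpowers y).map (MulAut.conj a).toMonoidHom := by
          rw [MulAction.stabilizer_smul_eq_stabilizer_map_conj, MulAction.stabilizer_quotient]
      _ = Subgroup.zpowers (rot y a) := MonoidHom.map_zpowers _ y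

theorem period_rot_smul (g : G) (v w : Vertex y) :
    MulAction.period (rot y (g • v)) (g • w) = MulAction.period (rot y v) w := by
  rw [rot_smul, period_conj_smul]

theorem period_rot_dvd_orderOf (v w : Vertex y) :
    MulAction.period (rot y v) w ∣ orderOf y :=
  orderOf_rot v ▸ MulAction.period_dvd_orderOf _ _

theorem rot_pow_mem_zpowers (hy : IsOfFinOrder y) {n : ℕ} (h : rot y v ^ n • w = w) :
    rot y v ^ n ∈ Subgroup.zpowers (rot y w ^ n) := by
  refine mem_zpowers_of_orderOf_dvd (isOfFinOrder_rot hy w) ?_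
    (Subgroup.npow_mem_zpowers _ n) ?_
  · rwa [← stabilizer_eq_zpowers_rot]
  · rw [(isOfFinOrder_rot hy v).orderOf_pow, (isOfFinOrder_rot hy w).orderOf_pow, orderOf_rot,
      orderOf_rot]

instance : Std.Symm (Adj x y) where
  symm _ _ := fun ⟨hne, g, hg⟩ => ⟨hne.symm, g, by rw [Set.pair_comm, hg]⟩

theorem Adj.smul (g : G) (h : Adj x y v w) : Adj x y (g • v) (g • w) := by
  obtain ⟨hne, a, ha⟩ := h
  refine ⟨(MulAction.injective g).ne hne, g * a, ?_⟩
  simpa only [Set.image_pair, MulAction.Quotient.smul_coe, smul_eq_mul, mul_assoc]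
    using congrArg (Set.image (g • ·)) ha

theorem Adj.exists_mk (hxy : (x * y) ^ 2 = 1) (h : Adj x y v w) :
    ∃ g : G, v = g ∧ w = ↑(g * x * y) := by
  obtain ⟨-, g, hg⟩ := h
  rcases Set.pair_eq_pair_iff.mp hg with hvw | ⟨hv, hw⟩
  · exact ⟨g, hvw⟩
  · refine ⟨g * x * y, hv, ?_⟩
    rw [hw, mul_assoc (g * x * y), mul_assoc g, mul_assoc g, ← pow_two, hxy, mul_one]

theorem Adj.exists_smul_eq (hxy : (x * y) ^ 2 = 1) (h : Adj x y v w) (h' : Adj x y v' w') :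
    ∃ g : G, g • v = v' ∧ g • w = w' := by
  obtain ⟨a, rfl, rfl⟩ := h.exists_mk hxy
  obtain ⟨b, rfl, rfl⟩ := h'.exists_mk hxy
  refine ⟨b * a⁻¹, ?_, ?_⟩ <;>
    simp only [MulAction.Quotient.smul_coe, smul_eq_mul, mul_assoc, inv_mul_cancel_left,
      inv_mul_cancel, mul_one]

theorem Adj.eq_one_of_smul_eq (hxy : (x * y) ^ 2 = 1) (hsimple : IsSimple x y)
    (h : Adj x y v w) {g : G} (hv : g • v = v) (hw : g • w = w) : g = 1 := by
  obtain ⟨hne, -⟩ := id h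
  obtain ⟨a, rfl, rfl⟩ := h.exists_mk hxy
  have hga : ((g * a : G) : Vertex y) = a := hv
  have hgaxy : ((g * a * x * y : G) : Vertex y) = ↑(a * x * y) := by
    rwa [MulAction.Quotient.smul_coe, smul_eq_mul, ← mul_assoc, ← mul_assoc] at hw
  have hedge : (a : G ⧸ Subgroup.zpowers (x * y)) = ↑(g * a) :=
    hsimple.2 a (g * a) (by rw [hga, hgaxy])
  rcases mem_zpowers_of_sq_eq_one hxy (QuotientGroup.eq.mp hedge) with hfixed | hflip
  · exact mul_eq_right.mp (inv_mul_eq_one.mp hfixed).symm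
  · rw [inv_mul_eq_iff_eq_mul, ← mul_assoc] at hflip
    exact absurd (hflip ▸ hga).symm hne

theorem Adj.period_rot (hxy : (x * y) ^ 2 = 1) (hsimple : IsSimple x y) (h : Adj x y v w) :
    MulAction.period (rot y v) w = orderOf y := by
  have hv : rot y v ^ MulAction.period (rot y v) w • v = v := by
    rw [← MulAction.mem_stabilizer_iff, stabilizer_eq_zpowers_rot]
    exact Subgroup.npow_mem_zpowers _ _
  apply Nat.dvd_antisymm (period_rot_dvd_orderOf v w)
  rw [← orderOf_rot v]
  exact orderOf_dvd_of_pow_eq_one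
    (h.eq_one_of_smul_eq hxy hsimple hv (MulAction.pow_period_smul _ _))

theorem reflTransGen_adj (hgen : Subgroup.closure {x, y} = ⊤) (v w : Vertex y) :
    Relation.ReflTransGen (Adj x y) v w := by
  have mk_mul_y (g : G) : ((g * y : G) : Vertex y) = g :=
    QuotientGroup.mk_mul_of_mem g (Subgroup.mem_zpowers y)
  have reach_mul_gen (g s : G) (hs : s ∈ ({x, y} : Set G)) :
      Relation.ReflTransGen (Adj x y) g ↑(g * s) := by
    rcases hs with rfl | rfl
    · by_cases hloop : (g : Vertex y) = ↑(g * s)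
      · rw [← hloop]
      · exact .single ⟨hloop, g, by rw [mk_mul_y]⟩
    · rw [mk_mul_y]
  induction v using QuotientGroup.induction_on with | H a => ?_
  induction w using QuotientGroup.induction_on with | H b => ?_
  suffices ∀ g ∈ Subgroup.closure {x, y}, Relation.ReflTransGen (Adj x y) a ↑(a * g) by
    simpa only [mul_inv_cancel_left] using this (a⁻¹ * b) (hgen ▸ Subgroup.mem_top _)
  intro g hg
  induction hg using Subgroup.closure_induction_right with
  | one => rw [mul_one]
  | mul_right g _ s hs ih =>
    rw [← mul_assoc]
    exact ih.trans (reach_mul_gen _ s hs)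
  | mul_inv_cancel g _ s hs ih =>
    have hback := reach_mul_gen (a * g * s⁻¹) s hs
    rw [inv_mul_cancel_right] at hback
    rw [← mul_assoc]
    exact ih.trans (symm_of _ hback)

theorem DiagNeighbor.smul (g : G) (h : DiagNeighbor x y v v') :
    DiagNeighbor x y (g • v) (g • v') := by
  obtain ⟨w, hvw, rfl⟩ := h
  refine ⟨g • w, hvw.smul g, ?_⟩
  rw [rot_smul, conj_pow_smul_smul]

theorem DiagNeighbor.exists_smul_eq (hxy : (x * y) ^ 2 = 1) (h : DiagNeighbor x y v v')
    (h' : DiagNeighbor x y w w') : ∃ g : G, g • v = w ∧ g • v' = w' := by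
  obtain ⟨u, hvu, rfl⟩ := h
  obtain ⟨u', hwu', rfl⟩ := h'
  obtain ⟨g, rfl, rfl⟩ := hvu.exists_smul_eq hxy hwu'
  refine ⟨g, rfl, ?_⟩
  rw [rot_smul, conj_pow_smul_smul]

theorem DiagNeighbor.period_rot_eq (hxy : (x * y) ^ 2 = 1) (h : DiagNeighbor x y v v')
    (h' : DiagNeighbor x y w w') :
    MulAction.period (rot y v) v' = MulAction.period (rot y w) w' := by
  obtain ⟨g, rfl, rfl⟩ := h.exists_smul_eq hxy h'
  exact (period_rot_smul g v v').symm

theorem Aligned.rot_pow_mem_zpowers (hy : IsOfFinOrder y) {n : ℕ}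
    (hfix : ∀ a b : Vertex y, DiagNeighbor x y a b → rot y a ^ n • b = b)
    (h : Aligned x y v w) : rot y v ^ n ∈ Subgroup.zpowers (rot y w ^ n) := by
  induction h with
  | refl => exact Subgroup.mem_zpowers _
  | tail _ hdiag ih =>
    exact Subgroup.zpowers_le.mpr (RegularMap.rot_pow_mem_zpowers hy (hfix _ _ hdiag)) ih

theorem Aligned.rot_pow_smul (hy : IsOfFinOrder y) {n : ℕ}
    (hfix : ∀ a b : Vertex y, DiagNeighbor x y a b → rot y a ^ n • b = b)
    (h : Aligned x y v w) : rot y v ^ n • w = w := by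
  rw [← MulAction.mem_stabilizer_iff, stabilizer_eq_zpowers_rot]
  exact Subgroup.zpowers_le.mpr (Subgroup.npow_mem_zpowers _ n) (h.rot_pow_mem_zpowers hy hfix)

theorem DiagNeighbor.of_adj (hxy : (x * y) ^ 2 = 1) (hdiag : DiagNeighbor x y v v')
    (hadj : Adj x y v v') (h : Adj x y w w') : DiagNeighbor x y w w' := by
  obtain ⟨g, rfl, rfl⟩ := hadj.exists_smul_eq hxy h
  exact hdiag.smul g

theorem DiagNeighbor.aligned_of_adj (hgen : Subgroup.closure {x, y} = ⊤)
    (hxy : (x * y) ^ 2 = 1) (hdiag : DiagNeighbor x y v v') (hadj : Adj x y v v')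
    (w w' : Vertex y) : Aligned x y w w' :=
  Relation.ReflTransGen.mono (fun _ _ => hdiag.of_adj hxy hadj) _ _ (reflTransGen_adj hgen w w')

theorem primPeriod_spec (x : G) (hy : IsOfFinOrder y) :
    1 ≤ primPeriod x y ∧ ∀ v w : Vertex y, Aligned x y v w → rot y v ^ primPeriod x y • w = w :=
  Nat.sInf_mem
    (s := {j | 1 ≤ j ∧ ∀ v w : Vertex y, Aligned x y v w → rot y v ^ j • w = w})
    ⟨orderOf y, hy.orderOf_pos, fun v w _ => by
      rw [← orderOf_rot v, pow_orderOf_eq_one, one_smul]⟩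

theorem primPeriod_le {n : ℕ} (hn : 0 < n)
    (hfix : ∀ v w : Vertex y, Aligned x y v w → rot y v ^ n • w = w) : primPeriod x y ≤ n :=
  Nat.sInf_le ⟨hn, hfix⟩

theorem Aligned.period_rot_dvd_primPeriod (hy : IsOfFinOrder y) (h : Aligned x y v w) :
    MulAction.period (rot y v) w ∣ primPeriod x y :=
  MulAction.pow_smul_eq_iff_period_dvd.mp ((primPeriod_spec x hy).2 v w h)

theorem DiagNeighbor.primPeriod_eq_period_rot (hy : IsOfFinOrder y) (hxy : (x * y) ^ 2 = 1)
    (h : DiagNeighbor x y v v') : primPeriod x y = MulAction.period (rot y v) v' := by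
  apply le_antisymm
  · refine primPeriod_le
      (MulAction.period_pos_of_orderOf_pos (isOfFinOrder_rot hy v).orderOf_pos v')
      fun _ _ haligned => haligned.rot_pow_smul hy fun a b hab => ?_
    rw [h.period_rot_eq hxy hab, MulAction.pow_period_smul]
  · exact Nat.le_of_dvd (primPeriod_spec x hy).1
      (Aligned.period_rot_dvd_primPeriod hy (Relation.ReflTransGen.single h))

theorem card_vertex_lt (hden : 2 * orderOf y ^ 2 > Nat.card G) :
    Nat.card (Vertex y) < 2 * orderOf y := by
  apply lt_of_mul_lt_mul_right _ (Nat.zero_le (orderOf y))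
  calc Nat.card (Vertex y) * orderOf y = Nat.card G := by
        rw [← Nat.card_zpowers, ← Subgroup.card_eq_card_quotient_mul_card_subgroup]
    _ < 2 * orderOf y ^ 2 := hden
    _ = 2 * orderOf y * orderOf y := by ring

theorem Adj.of_mem_orbit_rot (h : Adj x y v w)
    (hw' : w' ∈ MulAction.orbit (Subgroup.zpowers (rot y v)) w) : Adj x y v w' := by
  obtain ⟨⟨g, hg⟩, rfl : g • w = w'⟩ := hw'
  rw [← stabilizer_eq_zpowers_rot, MulAction.mem_stabilizer_iff] at hg
  simpa only [hg] using h.smul g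

theorem Adj.period_rot_eq_orderOf_iff [Finite G] (hxy : (x * y) ^ 2 = 1)
    (hsimple : IsSimple x y) (hden : 2 * orderOf y ^ 2 > Nat.card G) (h : Adj x y v w) :
    MulAction.period (rot y v) v' = orderOf y ↔ Adj x y v v' := by
  refine ⟨fun hperiod => ?_, Adj.period_rot hxy hsimple⟩
  by_contra hnadj
  have hle := period_add_period_le_card (mt h.of_mem_orbit_rot hnadj)
  rw [h.period_rot hxy hsimple, hperiod] at hle
  have := card_vertex_lt hden
  omega

end Map

theorem primPeriod_eq_q_iff_general
    (G : Type*) [Group G] [Finite G] (x y : G)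
    (hgen : Subgroup.closure {x, y} = ⊤) (hxy : (x * y) ^ 2 = 1)
    (hsimple : IsSimple x y) (hden : 2 * orderOf y ^ 2 > Nat.card G)
    (v v' : Vertex y) (hdiag : DiagNeighbor x y v v') :
    (primPeriod x y = orderOf y ↔ Adj x y v v') ∧
    (primPeriod x y = orderOf y ↔ ∀ w : Vertex y, Aligned x y v w) := by
  have hy : IsOfFinOrder y := isOfFinOrder_of_finite y
  obtain ⟨w, hw, -⟩ := id hdiag
  have hJ_iff_adj : primPeriod x y = orderOf y ↔ Adj x y v v' := by
    rw [hdiag.primPeriod_eq_period_rot hy hxy, hw.period_rot_eq_orderOf_iff hxy hsimple hden]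
  refine ⟨hJ_iff_adj, fun hJ => ?_, fun hall => ?_⟩
  · exact hdiag.aligned_of_adj hgen hxy (hJ_iff_adj.mp hJ) v
  · apply Nat.dvd_antisymm
    · exact hdiag.primPeriod_eq_period_rot hy hxy ▸ period_rot_dvd_orderOf v v'
    · rw [← hw.period_rot hxy hsimple]
      exact (hall w).period_rot_dvd_primPeriod hy

/-- For a diagonal neighbour `v'` of `v`: `J = q` iff `v'` is adjacent to `v`, and
`J = q` iff `V_v = V`. -/
theorem primPeriod_eq_q_iff
    (G : Type*) [Group G] [Finite G] (x y : G)
    (hgen : Subgroup.closure {x, y} = ⊤) (hxy : (x * y) ^ 2 = 1)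
    (hrefl : IsReflexive x y) (hsimple : IsSimple x y)
    (hden : 2 * orderOf y ^ 2 > Nat.card G) (hp : orderOf x = 3)
    (v v' : Vertex y) (hdiag : DiagNeighbor x y v v') :
    (primPeriod x y = orderOf y ↔ Adj x y v v') ∧
    (primPeriod x y = orderOf y ↔ ∀ w : Vertex y, Aligned x y v w) := by
  exact primPeriod_eq_q_iff_general G x y hgen hxy hsimple hden v v' hdiag

end RegularMap
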